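/- Let A be a commutative noetherian local ring, let x, y ∈ A be a regular exact pair of zero divisors, and let a ∈ A be weakly regular on the A-module A/(x, y). Then the canonical A-algebra maps A → End_A(G_a) and A → End_A(H_a) are isomorphisms; in particular End_A(G_a) and End_A(H_a) are commutative noetherian local rings, and the A-modules G_a and H_a are indecomposable. -/

import Mathlib

/-!
Formalization of results from "Construction of totally reflexive modules
from an exact pair of zero divisors" by Henrik Holm.
-/

noncomputable section

/-- Non-units `x, y` in `A` form an *exact pair of zero divisors* if
`Ann_A(x) = (y)` and `Ann_A(y) = (x)`. -/
def IsExactZeroDivisorPair {A : Type*} [CommRing A] (x y : A) : Prop :=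
  ¬ IsUnit x ∧ ¬ IsUnit y ∧
    (∀ a : A, a * x = 0 ↔ a ∈ Ideal.span {y}) ∧
    (∀ a : A, a * y = 0 ↔ a ∈ Ideal.span {x})

open Matrix in
/-- The matrix `γ_a = [[x, a], [0, y]]`. -/
def gammaMat {A : Type*} [CommRing A] (x y a : A) : Matrix (Fin 2) (Fin 2) A :=
  !![x, a; 0, y]

open Matrix in
/-- The matrix `η_a = [[y, -a], [0, x]]`. -/
def etaMat {A : Type*} [CommRing A] (x y a : A) : Matrix (Fin 2) (Fin 2) A :=
  !![y, -a; 0, x]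

/-- `G_a`, the cokernel of `γ_a : A² → A²`. -/
abbrev Gmod {A : Type*} [CommRing A] (x y a : A) : Type _ :=
  (Fin 2 → A) ⧸ LinearMap.range (Matrix.toLin' (gammaMat x y a))

/-- `H_a`, the cokernel of `η_a : A² → A²`. -/
abbrev Hmod {A : Type*} [CommRing A] (x y a : A) : Type _ :=
  (Fin 2 → A) ⧸ LinearMap.range (Matrix.toLin' (etaMat x y a))

/-- An `A`-module is *indecomposable* if it is nonzero and is not the internal
direct sum of two nonzero submodules. -/
def IsIndecomposableModule (A : Type*) [CommRing A] (M : Type*)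
    [AddCommGroup M] [Module A M] : Prop :=
  (∃ m : M, m ≠ 0) ∧ ∀ N P : Submodule A M, IsCompl N P → N = ⊥ ∨ P = ⊥

/-!
Since `A²` is free, an endomorphism of `coker γ` lifts to a pair of matrices with `B γ = γ C`, and
it is multiplication by `r` as soon as `B = r + γ D` for some `D`; multiplication by `r` is zero
only if `r = γ D` for some `D`. For `γ = γ_a` everything is read off entry by entry: an element of
`(x) ∩ (y)` vanishes, an element killed by `x` (by `y`) is a multiple of `y` (of `x`), and a factor
`a` can be cancelled modulo `(x, y)`. The statement for `H_a` follows because `η_a` is `γ_{-a}` with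
the roles of `x` and `y` exchanged.
-/

theorem exists_comp_eq_of_range_le_range {R M N P : Type*} [Semiring R] [AddCommMonoid M]
    [Module R M] [AddCommMonoid N] [Module R N] [AddCommMonoid P] [Module R P]
    [Module.Projective R P] {f : M →ₗ[R] N} {g : P →ₗ[R] N}
    (h : LinearMap.range g ≤ LinearMap.range f) : ∃ k : P →ₗ[R] M, f ∘ₗ k = g := by
  obtain ⟨k, hk⟩ := Module.projective_lifting_property f.rangeRestrict
    (g.codRestrict (LinearMap.range f) fun p => h (LinearMap.mem_range_self g p))
    f.surjective_rangeRestrict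
  exact ⟨k, LinearMap.ext fun p => congrArg Subtype.val (LinearMap.congr_fun hk p)⟩

section Cokernel

variable {R P Q : Type*} [CommRing R] [AddCommGroup P] [Module R P] [AddCommGroup Q] [Module R Q]

theorem algebraMap_end_quotient_range_injective [Module.Projective R Q] {φ : P →ₗ[R] Q}
    (hφ : ∀ (r : R) (δ : Q →ₗ[R] P), φ ∘ₗ δ = r • LinearMap.id → r = 0) :
    Function.Injective (algebraMap R (Module.End R (Q ⧸ LinearMap.range φ))) := by
  refine (injective_iff_map_eq_zero _).2 fun r hr => ?_
  have hrange : LinearMap.range (r • LinearMap.id : Q →ₗ[R] Q) ≤ LinearMap.range φ := by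
    rintro _ ⟨q, rfl⟩
    rw [← Submodule.Quotient.mk_eq_zero]
    exact LinearMap.congr_fun hr (Submodule.Quotient.mk q)
  obtain ⟨δ, hδ⟩ := exists_comp_eq_of_range_le_range hrange
  exact hφ r δ hδ

theorem algebraMap_end_quotient_range_surjective [Module.Projective R P] [Module.Projective R Q]
    {φ : P →ₗ[R] Q}
    (hφ : ∀ (β : Q →ₗ[R] Q) (α : P →ₗ[R] P), β ∘ₗ φ = φ ∘ₗ α →
      ∃ (r : R) (δ : Q →ₗ[R] P), β = r • LinearMap.id + φ ∘ₗ δ) :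
    Function.Surjective (algebraMap R (Module.End R (Q ⧸ LinearMap.range φ))) := by
  intro f
  set π := (LinearMap.range φ).mkQ
  have hπφ (p : P) : π (φ p) = 0 := LinearMap.congr_fun (LinearMap.range_mkQ_comp φ) p
  obtain ⟨β, hβ⟩ := Module.projective_lifting_property π (f ∘ₗ π) (Submodule.mkQ_surjective _)
  have hrange : LinearMap.range (β ∘ₗ φ) ≤ LinearMap.range φ := by
    rintro _ ⟨p, rfl⟩
    rw [← Submodule.Quotient.mk_eq_zero]
    calc π (β (φ p)) = f (π (φ p)) := LinearMap.congr_fun hβ (φ p)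
      _ = 0 := by rw [hπφ, map_zero]
  obtain ⟨α, hα⟩ := exists_comp_eq_of_range_le_range hrange
  obtain ⟨r, δ, rfl⟩ := hφ β α hα.symm
  refine ⟨r, Submodule.linearMap_qext _ (LinearMap.ext fun q => ?_)⟩
  calc r • π q = π (r • q + φ (δ q)) := by rw [map_add, map_smul, hπφ, add_zero]
    _ = f (π q) := LinearMap.congr_fun hβ q

end Cokernel

theorem mul_comm_of_algebraMap_surjective {R S : Type*} [CommSemiring R] [Semiring S] [Algebra R S]
    (h : Function.Surjective (algebraMap R S)) (s t : S) : s * t = t * s := by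
  obtain ⟨r, rfl⟩ := h s
  exact Algebra.commutes r t

theorem isIndecomposableModule_of_isLocalRing_end {A M : Type*} [CommRing A] [AddCommGroup M]
    [Module A M] [IsLocalRing (Module.End A M)] : IsIndecomposableModule A M := by
  have : Nontrivial M :=
    not_subsingleton_iff_nontrivial.1 fun _ => not_subsingleton (Module.End A M) inferInstance
  refine ⟨exists_ne 0, fun N P hNP => ?_⟩
  set e : Module.End A M := N.projection P hNP
  have he {m : M} (hm : m ∈ N) : (1 - e) m = 0 := by
    simp [e, Submodule.projection_apply_of_mem_left hNP hm]
  have he' {m : M} (hm : m ∈ P) : e m = 0 := (Submodule.projection_apply_eq_zero_iff hNP).2 hm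
  rcases IsLocalRing.isUnit_or_isUnit_of_add_one (add_sub_cancel e 1) with hu | hu
  · refine Or.inr ((Submodule.eq_bot_iff P).2 fun m hm => ?_)
    exact (map_eq_zero_iff e ((Module.End.isUnit_iff e).1 hu).injective).1 (he' hm)
  · refine Or.inl ((Submodule.eq_bot_iff N).2 fun m hm => ?_)
    exact (map_eq_zero_iff (1 - e) ((Module.End.isUnit_iff _).1 hu).injective).1 (he hm)

section ExactPair

variable {A : Type*} [CommRing A] {x y a : A}

namespace IsExactZeroDivisorPair

theorem symm (hxy : IsExactZeroDivisorPair x y) : IsExactZeroDivisorPair y x :=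
  ⟨hxy.2.1, hxy.1, hxy.2.2.2, hxy.2.2.1⟩

theorem dvd_of_mul_eq_zero (hxy : IsExactZeroDivisorPair x y) {u : A} (hu : x * u = 0) : y ∣ u :=
  Ideal.mem_span_singleton.1 ((hxy.2.2.1 u).1 (mul_comm x u ▸ hu))

end IsExactZeroDivisorPair

theorem eq_zero_of_dvd_of_dvd_of_disjoint_span
    (hdisj : Disjoint (Ideal.span {x}) (Ideal.span {y})) {u : A} (hx : x ∣ u) (hy : y ∣ u) :
    u = 0 :=
  Submodule.disjoint_def.1 hdisj u (Ideal.mem_span_singleton.2 hx) (Ideal.mem_span_singleton.2 hy)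

theorem gammaMat_mul (x y a : A) (D : Matrix (Fin 2) (Fin 2) A) :
    gammaMat x y a * D =
      !![x * D 0 0 + a * D 1 0, x * D 0 1 + a * D 1 1; y * D 1 0, y * D 1 1] := by
  ext i j
  fin_cases i <;> fin_cases j <;> simp [gammaMat, Matrix.mul_apply]

theorem mul_gammaMat (B : Matrix (Fin 2) (Fin 2) A) (x y a : A) :
    B * gammaMat x y a =
      !![B 0 0 * x, B 0 0 * a + B 0 1 * y; B 1 0 * x, B 1 0 * a + B 1 1 * y] := by
  ext i j
  fin_cases i <;> fin_cases j <;> simp [gammaMat, Matrix.mul_apply]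

theorem eq_zero_of_gammaMat_mul_eq_smul_one (hy : ∀ u, y * u = 0 → x ∣ u)
    (hdisj : Disjoint (Ideal.span {x}) (Ideal.span {y})) {r : A} {D : Matrix (Fin 2) (Fin 2) A}
    (hD : gammaMat x y a * D = r • 1) : r = 0 := by
  rw [gammaMat_mul] at hD
  have h₀₀ : x * D 0 0 + a * D 1 0 = r := by simpa using congrFun₂ hD 0 0
  have h₁₀ : y * D 1 0 = 0 := by simpa using congrFun₂ hD 1 0
  have h₁₁ : y * D 1 1 = r := by simpa using congrFun₂ hD 1 1
  have hxr : x ∣ r := h₀₀ ▸ (dvd_mul_right x _).add ((hy _ h₁₀).mul_left a)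
  exact eq_zero_of_dvd_of_dvd_of_disjoint_span hdisj hxr ⟨_, h₁₁.symm⟩

theorem exists_eq_smul_one_add_gammaMat_mul (hx : ∀ u, x * u = 0 → y ∣ u)
    (hy : ∀ u, y * u = 0 → x ∣ u) (hdisj : Disjoint (Ideal.span {x}) (Ideal.span {y}))
    (ha : IsSMulRegular (A ⧸ Ideal.span {x, y}) a) {B C : Matrix (Fin 2) (Fin 2) A}
    (hBC : B * gammaMat x y a = gammaMat x y a * C) :
    ∃ (r : A) (D : Matrix (Fin 2) (Fin 2) A), B = r • 1 + gammaMat x y a * D := by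
  rw [mul_gammaMat, gammaMat_mul] at hBC
  have h₁₀ : B 1 0 * x = y * C 1 0 := congrFun₂ hBC 1 0
  have h₀₁ : B 0 0 * a + B 0 1 * y = x * C 0 1 + a * C 1 1 := congrFun₂ hBC 0 1
  have h₁₁ : B 1 0 * a + B 1 1 * y = y * C 1 1 := congrFun₂ hBC 1 1
  obtain ⟨q, hq⟩ : y ∣ B 1 0 :=
    hx _ (eq_zero_of_dvd_of_dvd_of_disjoint_span hdisj (dvd_mul_right x _)
      ⟨C 1 0, by rw [mul_comm, h₁₀]⟩)
  obtain ⟨w, hw⟩ : x ∣ C 1 1 - B 1 1 - a * q := hy _ (by linear_combination a * hq - h₁₁)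
  obtain ⟨b, c, hbc⟩ : ∃ b c, b * x + c * y = B 0 0 - a * q - B 1 1 := by
    refine Ideal.mem_span_pair.1 (mem_of_isSMulRegular_quotient_of_smul_mem ha ?_)
    exact Ideal.mem_span_pair.2
      ⟨C 0 1 + a * w, -B 0 1, by rw [smul_eq_mul]; linear_combination -h₀₁ - a * hw⟩
  obtain ⟨d, hd⟩ : x ∣ B 0 1 + a * c :=
    hy _ (eq_zero_of_dvd_of_dvd_of_disjoint_span hdisj
      ⟨C 0 1 + a * w - a * b, by linear_combination h₀₁ + a * hw + a * hbc⟩ (dvd_mul_right y _))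
  refine ⟨B 1 1 + c * y, !![b, d; q, -c], ?_⟩
  have e₀₀ : B 0 0 = B 1 1 + c * y + (x * b + a * q) := by linear_combination -hbc
  have e₀₁ : B 0 1 = x * d + a * -c := by linear_combination hd
  have e₁₁ : B 1 1 = B 1 1 + c * y + y * -c := by ring
  rw [gammaMat_mul]
  ext i j
  fin_cases i <;> fin_cases j
  · simpa using e₀₀
  · simpa using e₀₁
  · simpa using hq
  · simpa using e₁₁

theorem algebraMap_end_Gmod_bijective (hxy : IsExactZeroDivisorPair x y)
    (hdisj : Disjoint (Ideal.span {x}) (Ideal.span {y}))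
    (ha : IsSMulRegular (A ⧸ Ideal.span {x, y}) a) :
    Function.Bijective (algebraMap A (Module.End A (Gmod x y a))) := by
  have hx (u : A) : x * u = 0 → y ∣ u := hxy.dvd_of_mul_eq_zero
  have hy (u : A) : y * u = 0 → x ∣ u := hxy.symm.dvd_of_mul_eq_zero
  constructor
  · refine algebraMap_end_quotient_range_injective fun r δ hδ => ?_
    obtain ⟨D, rfl⟩ := Matrix.toLin'.surjective δ
    have hD : gammaMat x y a * D = r • 1 :=
      Matrix.toLin'.injective (by rw [Matrix.toLin'_mul, hδ, map_smul, Matrix.toLin'_one])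
    exact eq_zero_of_gammaMat_mul_eq_smul_one hy hdisj hD
  · refine algebraMap_end_quotient_range_surjective fun β α hβα => ?_
    obtain ⟨B, rfl⟩ := Matrix.toLin'.surjective β
    obtain ⟨C, rfl⟩ := Matrix.toLin'.surjective α
    have hBC : B * gammaMat x y a = gammaMat x y a * C :=
      Matrix.toLin'.injective (by rw [Matrix.toLin'_mul, hβα, Matrix.toLin'_mul])
    obtain ⟨r, D, rfl⟩ := exists_eq_smul_one_add_gammaMat_mul hx hy hdisj ha hBC
    exact ⟨r, Matrix.toLin' D, by
      rw [map_add, map_smul, Matrix.toLin'_one, Matrix.toLin'_mul]⟩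

theorem algebraMap_end_Hmod_bijective (hxy : IsExactZeroDivisorPair x y)
    (hdisj : Disjoint (Ideal.span {x}) (Ideal.span {y}))
    (ha : IsSMulRegular (A ⧸ Ideal.span {x, y}) a) :
    Function.Bijective (algebraMap A (Module.End A (Hmod x y a))) := by
  have ha' : IsSMulRegular (A ⧸ Ideal.span {y, x}) (-a) := by
    rw [Set.pair_comm]
    exact fun m n hmn => ha (by simpa only [neg_smul, neg_inj] using hmn)
  change Function.Bijective (algebraMap A (Module.End A (Gmod y x (-a))))
  exact algebraMap_end_Gmod_bijective hxy.symm hdisj.symm ha'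

end ExactPair

/-- **Theorem (4.5).** Let `x, y` be a regular exact pair of zero divisors and
let `a ∈ A` be weakly regular on `A/(x, y)`. Then the canonical `A`-algebra
maps `A → End_A(G_a)` and `A → End_A(H_a)` are isomorphisms; in particular the
endomorphism rings are commutative, noetherian and local, and `G_a`, `H_a` are
indecomposable. -/
theorem end_G_H_eq_A {A : Type*} [CommRing A] [IsNoetherianRing A]
    [IsLocalRing A] {x y : A} (hxy : IsExactZeroDivisorPair x y)
    (hreg : Ideal.span ({x} : Set A) ⊓ Ideal.span ({y} : Set A) = ⊥) {a : A}
    (ha : Function.Injective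
      fun m : A ⧸ Ideal.span ({x, y} : Set A) => a • m) :
    Function.Bijective (algebraMap A (Module.End A (Gmod x y a))) ∧
    Function.Bijective (algebraMap A (Module.End A (Hmod x y a))) ∧
    (∀ f g : Module.End A (Gmod x y a), f * g = g * f) ∧
    (∀ f g : Module.End A (Hmod x y a), f * g = g * f) ∧
    IsNoetherianRing (Module.End A (Gmod x y a)) ∧
    IsNoetherianRing (Module.End A (Hmod x y a)) ∧
    IsLocalRing (Module.End A (Gmod x y a)) ∧
    IsLocalRing (Module.End A (Hmod x y a)) ∧
    IsIndecomposableModule A (Gmod x y a) ∧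
    IsIndecomposableModule A (Hmod x y a) := by
  have hG := algebraMap_end_Gmod_bijective hxy (disjoint_iff.2 hreg) ha
  have hH := algebraMap_end_Hmod_bijective hxy (disjoint_iff.2 hreg) ha
  have : IsLocalRing (Module.End A (Gmod x y a)) := (RingEquiv.ofBijective _ hG).isLocalRing
  have : IsLocalRing (Module.End A (Hmod x y a)) := (RingEquiv.ofBijective _ hH).isLocalRing
  exact ⟨hG, hH,
    mul_comm_of_algebraMap_surjective hG.surjective,
    mul_comm_of_algebraMap_surjective hH.surjective,
    isNoetherianRing_of_surjective _ _ _ hG.surjective,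
    isNoetherianRing_of_surjective _ _ _ hH.surjective,
    inferInstance, inferInstance,
    isIndecomposableModule_of_isLocalRing_end, isIndecomposableModule_of_isLocalRing_end⟩
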